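/- The characteristic polynomial of P_∅ factors as charpoly(P_∅) = (X − 1)·(X + 1/(n−1))^{n−1}·charpoly((1/(n−1))·Ψ_μ) in ℝ[X]. (Equivalently, the spectrum of P_∅ as a multiset is the union of the spectrum of (1/(n−1))·Ψ_μ, n−1 copies of −1/(n−1), and one copy of 1.) -/

import Mathlib

open scoped Classical
open Finset Polynomial

noncomputable section

namespace PaperStmt

variable {n : ℕ}

/-- Probability of an event under `μ`. -/
def prE (μ : Finset (Fin n) → ℝ) (E : Finset (Fin n) → Prop) : ℝ :=
  ∑ S : Finset (Fin n), if E S then μ S else 0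

/-- Conditional probability `Pr[E | F]` under `μ`. -/
def condPrE (μ : Finset (Fin n) → ℝ) (E F : Finset (Fin n) → Prop) : ℝ :=
  prE μ (fun S => E S ∧ F S) / prE μ F

/-- The pairwise influence matrix `Ψ_μ`. -/
def psi (μ : Finset (Fin n) → ℝ) : Matrix (Fin n) (Fin n) ℝ :=
  fun i j => if i = j then 0 else
    condPrE μ (fun S => j ∈ S) (fun S => i ∈ S)
      - condPrE μ (fun S => j ∈ S) (fun S => i ∉ S)

/-- The event "`i` has state `s`" (`true` = in, `false` = out). -/
def stateEvent (i : Fin n) (s : Bool) : Finset (Fin n) → Prop :=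
  fun S => if s then i ∈ S else i ∉ S

/-- The skeleton walk matrix `P_∅`, indexed by pairs `(i, s) ∈ [n] × {in, out}`. -/
def skeletonWalk (μ : Finset (Fin n) → ℝ) :
    Matrix (Fin n × Bool) (Fin n × Bool) ℝ :=
  fun p q => if p.1 = q.1 then 0 else
    (1 / ((n : ℝ) - 1)) * condPrE μ (stateEvent q.1 q.2) (stateEvent p.1 p.2)

/-- A block matrix whose block rows sum to the same `K` splits as `K` and a difference of rows. -/
theorem charpoly_fromBlocks_sub {ι R : Type*} [Fintype ι] [DecidableEq ι] [CommRing R]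
    (K A B : Matrix ι ι R) :
    (Matrix.fromBlocks (K - B) B (K - A) A).charpoly = K.charpoly * (A - B).charpoly := by
  have h : Matrix.fromBlocks (K - B) B (K - A) A
      = Matrix.fromBlocks 1 0 1 1 * (Matrix.fromBlocks K B 0 (A - B)
        * Matrix.fromBlocks 1 0 (-1) 1) := by
    simp [Matrix.fromBlocks_multiply, sub_eq_add_neg, add_assoc]
  rw [h, Matrix.charpoly_mul_comm, mul_assoc, Matrix.fromBlocks_multiply]
  simp [Matrix.charpoly_fromBlocks_zero₂₁]

/-- The characteristic polynomial of `c (J - I)`, with `J` the all-ones matrix. -/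
theorem charpoly_vecMulVec_sub_scalar {R : Type*} [CommRing R] (hn : 1 ≤ n) (c : R) :
    (Matrix.vecMulVec (fun _ : Fin n => c) (fun _ => 1) - Matrix.scalar (Fin n) c).charpoly
      = (X + C c - C (n * c)) * (X + C c) ^ (n - 1) := by
  rw [Matrix.charpoly_sub_scalar, Matrix.charpoly_vecMulVec]
  obtain ⟨m, rfl⟩ := Nat.exists_eq_add_of_le' hn
  simp [dotProduct, pow_succ, smul_eq_C_mul]
  ring

theorem prE_not (μ : Finset (Fin n) → ℝ) (E F : Finset (Fin n) → Prop) :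
    prE μ (fun S => ¬ E S ∧ F S) = prE μ F - prE μ (fun S => E S ∧ F S) := by
  unfold prE
  rw [← Finset.sum_sub_distrib]
  refine Finset.sum_congr rfl fun S _ => ?_
  by_cases hE : E S <;> by_cases hF : F S <;> simp [hE, hF]

theorem condPrE_not (μ : Finset (Fin n) → ℝ) (E F : Finset (Fin n) → Prop)
    (hF : prE μ F ≠ 0) :
    condPrE μ (fun S => ¬ E S) F = 1 - condPrE μ E F := by
  rw [condPrE, condPrE, prE_not, sub_div, div_self hF]

theorem prE_compl (μ : Finset (Fin n) → ℝ) (hsum : ∑ S : Finset (Fin n), μ S = 1)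
    (E : Finset (Fin n) → Prop) : prE μ (fun S => ¬ E S) = 1 - prE μ E := by
  unfold prE
  rw [← hsum, ← Finset.sum_sub_distrib]
  refine Finset.sum_congr rfl fun S _ => ?_
  by_cases hE : E S <;> simp [hE]

theorem stateEvent_true (i : Fin n) : stateEvent i true = fun S => i ∈ S := by
  funext S
  simp [stateEvent]

theorem stateEvent_false (i : Fin n) : stateEvent i false = fun S => i ∉ S := by
  funext S
  simp [stateEvent]

/-- The part of the skeleton walk going from state `s` to state `in`. -/
def walkToIn (μ : Finset (Fin n) → ℝ) (s : Bool) : Matrix (Fin n) (Fin n) ℝ :=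
  fun i j => skeletonWalk μ (i, s) (j, true)

theorem skeletonWalk_out (μ : Finset (Fin n) → ℝ) (i j : Fin n) (s : Bool)
    (hs : prE μ (stateEvent i s) ≠ 0) :
    skeletonWalk μ (i, s) (j, false)
      = (Matrix.vecMulVec (fun _ : Fin n => 1 / ((n : ℝ) - 1)) (fun _ => 1)
        - Matrix.scalar (Fin n) (1 / ((n : ℝ) - 1)) - walkToIn μ s : Matrix (Fin n) (Fin n) ℝ) i j := by
  by_cases h : i = j
  · subst h
    simp [skeletonWalk, walkToIn, Matrix.vecMulVec]
  · have hc : condPrE μ (stateEvent j false) (stateEvent i s)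
        = 1 - condPrE μ (stateEvent j true) (stateEvent i s) := by
      rw [stateEvent_true, stateEvent_false, condPrE_not μ _ _ hs]
    simp [skeletonWalk, walkToIn, Matrix.vecMulVec, h, hc, mul_sub]

theorem walkToIn_sub (μ : Finset (Fin n) → ℝ) :
    walkToIn μ true - walkToIn μ false = (1 / ((n : ℝ) - 1)) • psi μ := by
  ext i j
  by_cases h : i = j
  · simp [walkToIn, skeletonWalk, psi, h]
  · simp [walkToIn, skeletonWalk, psi, h, stateEvent_true, stateEvent_false, mul_sub]

/-- The characteristic polynomial of `P_∅` factors as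
`(X - 1) · (X + 1/(n-1))^(n-1) · charpoly((1/(n-1)) • Ψ_μ)`. -/
theorem statement6 (n : ℕ) (hn : 2 ≤ n) (μ : Finset (Fin n) → ℝ)
    (hpos : ∀ S, 0 ≤ μ S) (hsum : ∑ S : Finset (Fin n), μ S = 1)
    (hmarg : ∀ i : Fin n, 0 < prE μ (fun S => i ∈ S)
      ∧ prE μ (fun S => i ∈ S) < 1) :
    (skeletonWalk μ).charpoly
      = (X - 1) * (X + C (1 / ((n : ℝ) - 1))) ^ (n - 1)
        * ((1 / ((n : ℝ) - 1)) • psi μ).charpoly := by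
  have hs (i : Fin n) (s : Bool) : prE μ (stateEvent i s) ≠ 0 := by
    obtain ⟨h0, h1⟩ := hmarg i
    cases s
    · have h := prE_compl μ hsum fun S => i ∈ S
      rw [stateEvent_false, h]
      linarith
    · simpa [stateEvent_true] using h0.ne'
  have hn1 : (n : ℝ) - 1 ≠ 0 := by
    have : (2 : ℝ) ≤ n := by exact_mod_cast hn
    linarith
  let e := (Equiv.prodComm (Fin n) Bool).trans (Equiv.boolProdEquivSum (Fin n))
  let K := Matrix.vecMulVec (fun _ : Fin n => 1 / ((n : ℝ) - 1)) (fun _ => 1)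
    - Matrix.scalar (Fin n) (1 / ((n : ℝ) - 1))
  have hblock : Matrix.reindex e e (skeletonWalk μ)
      = Matrix.fromBlocks (K - walkToIn μ false) (walkToIn μ false)
        (K - walkToIn μ true) (walkToIn μ true) := by
    ext (i | i) (j | j)
    · exact skeletonWalk_out μ i j false (hs i false)
    · rfl
    · exact skeletonWalk_out μ i j true (hs i true)
    · rfl
  have hC : (X + C (1 / ((n : ℝ) - 1)) - C (n * (1 / ((n : ℝ) - 1))) : ℝ[X]) = X - 1 := by
    rw [add_sub_assoc, ← C_sub, show 1 / ((n : ℝ) - 1) - n * (1 / ((n : ℝ) - 1)) = -1 by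
      field_simp; ring]
    simp [sub_eq_add_neg]
  rw [← Matrix.charpoly_reindex e, hblock, charpoly_fromBlocks_sub, walkToIn_sub,
    charpoly_vecMulVec_sub_scalar (by omega), hC]

end PaperStmt
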